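/- arXiv:2011.05749 — 4 statements merged into one kernel-verified Lean document; each statement's English description precedes it below -/
import Mathlib

section
/- Let 1 ≤ a ≤ a_m, let z_0, …, z_{a−1} ∈ ℂ be pairwise distinct, let p_0, …, p_{a−1} ∈ ℂ be all nonzero, and define m_k = Σ_{j=0}^{a−1} p_j · z_j^k for k ∈ ℕ. Then the a_m × a_m Hankel matrix M with entries M[r,c] = m_{r+c} has rank exactly a; in particular, the number of nonzero singular values of M equals the number a of exponential components. -/
open Finset Matrix

/-!
With `V n` the Vandermonde matrix of the nodes, truncated to the powers below `n`, and `D` the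
diagonal matrix of the weights, the Hankel matrix of the moments is `(V m)ᵀ * D * V n`. The inner
dimension bounds its rank by the number of nodes. Conversely its leading principal minor of that
order is `(∏ j, p j) * det V ^ 2`, which does not vanish when the nodes are distinct and the weights
nonzero. A node of zero weight contributes nothing and may be discarded.
-/

section MomentHankel

variable {R ι κ : Type*} [Semiring R] [Fintype ι] [Fintype κ]

/-- The `m × n` Hankel matrix of the moments `∑ j, p j * z j ^ k` of the weights `p` placed at the
nodes `z`. It is allowed to be rectangular, and the nodes are indexed by any finite type. -/
def momentHankel (z p : ι → R) (m n : ℕ) : Matrix (Fin m) (Fin n) R :=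
  Matrix.of fun r c => ∑ j, p j * z j ^ ((r : ℕ) + (c : ℕ))

theorem momentHankel_submatrix_castLE (z p : ι → R) {k l m n : ℕ} (hk : k ≤ m) (hl : l ≤ n) :
    (momentHankel z p m n).submatrix (Fin.castLE hk) (Fin.castLE hl) = momentHankel z p k l :=
  rfl

theorem momentHankel_comp_of_injective (z p : ι → R) {f : κ → ι} (hf : Function.Injective f)
    (hp : Function.support p ⊆ Set.range f) (m n : ℕ) :
    momentHankel (z ∘ f) (p ∘ f) m n = momentHankel z p m n := by
  ext r c
  refine Fintype.sum_of_injective f hf _ _ (fun j hj => ?_) fun _ => rfl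
  rw [Function.support_subset_iff'.1 hp j hj, zero_mul]

end MomentHankel

section Rank

variable {R ι : Type*} [CommRing R] [Fintype ι]

theorem momentHankel_eq_transpose_mul_diagonal_mul [DecidableEq ι] (z p : ι → R) (m n : ℕ) :
    momentHankel z p m n = (rectVandermonde z 1 m)ᵀ * (diagonal p * rectVandermonde z 1 n) := by
  ext r c
  simp only [momentHankel, of_apply, mul_apply (M := (rectVandermonde z 1 m)ᵀ), transpose_apply,
    diagonal_mul, rectVandermonde_apply, Pi.one_apply, one_pow, mul_one]
  exact Finset.sum_congr rfl fun j _ => by ring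

theorem det_momentHankel {k : ℕ} (z p : Fin k → R) :
    (momentHankel z p k k).det = (∏ j, p j) * (vandermonde z).det ^ 2 := by
  have hV : rectVandermonde z 1 k = vandermonde z := (vandermonde_eq_projVandermonde z).symm
  rw [momentHankel_eq_transpose_mul_diagonal_mul, hV, det_mul, det_mul, det_transpose, det_diagonal]
  ring

theorem rank_momentHankel_le_card [Nontrivial R] (z p : ι → R) (m n : ℕ) :
    (momentHankel z p m n).rank ≤ Fintype.card ι := by
  classical
  rw [momentHankel_eq_transpose_mul_diagonal_mul]
  exact (rank_mul_le_left _ _).trans (rank_le_card_width _)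

theorem rank_momentHankel_of_ne_zero [IsDomain R] {k m n : ℕ} {z p : Fin k → R}
    (hz : Function.Injective z) (hp : ∀ j, p j ≠ 0) (hm : k ≤ m) (hn : k ≤ n) :
    (momentHankel z p m n).rank = k := by
  have hdet : (momentHankel z p k k).det ≠ 0 := by
    rw [det_momentHankel]
    exact mul_ne_zero (prod_ne_zero_iff.2 fun j _ => hp j)
      (pow_ne_zero 2 (det_vandermonde_ne_zero_iff.2 hz))
  apply le_antisymm
  · simpa using rank_momentHankel_le_card z p m n
  · calc k = (momentHankel z p k k).rank := by simp [rank_of_det_ne_zero hdet]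
      _ ≤ (momentHankel z p m n).rank := by
        rw [← momentHankel_submatrix_castLE z p hm hn]
        exact rank_submatrix_le _ _ _

theorem hankel_moment_matrix_rank_general [IsDomain R] {m n : ℕ} {z p : ι → R}
    (hz : Set.InjOn z (Function.support p)) (hm : (Function.support p).ncard ≤ m)
    (hn : (Function.support p).ncard ≤ n) :
    (momentHankel z p m n).rank = (Function.support p).ncard := by
  let e : Fin (Function.support p).ncard ≃ Function.support p := (Finite.equivFin _).symm
  let f : Fin (Function.support p).ncard → ι := fun i => e i
  have hf : Function.Injective f := Subtype.val_injective.comp e.injective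
  have hzf : Function.Injective (z ∘ f) := hz.injective.comp e.injective
  have hrange : Function.support p ⊆ Set.range f := fun j hj => ⟨e.symm ⟨j, hj⟩, by simp [f]⟩
  rw [← momentHankel_comp_of_injective z p hf hrange]
  exact rank_momentHankel_of_ne_zero hzf (fun i => (e i).2) hm hn

end Rank

/-- If `m_k = Σ_{j<a} p_j z_j^k` with pairwise distinct nodes `z_j` and all
weights `p_j ≠ 0`, and `1 ≤ a ≤ a_m`, then the `a_m × a_m` Hankel matrix `M[r,c] = m_{r+c}`
has rank exactly `a` (equivalently, exactly `a` nonzero singular values). -/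
theorem hankel_moment_matrix_rank (a am : ℕ) (ha : 1 ≤ a) (ham : a ≤ am)
    (z p : Fin a → ℂ) (hz : Function.Injective z) (hp : ∀ j, p j ≠ 0) :
    (Matrix.of fun r c : Fin am => ∑ j : Fin a, p j * z j ^ ((r : ℕ) + (c : ℕ))).rank = a := by
  have hcard : (Function.support p).ncard = a := by
    simp [Function.support_eq_univ hp]
  exact (hankel_moment_matrix_rank_general hz.injOn (hcard.trans_le ham)
    (hcard.trans_le ham)).trans hcard
end

section
/- Let a ≥ 1, let z_0, …, z_{a−1} ∈ ℂ be pairwise distinct, let p_0, …, p_{a−1} ∈ ℂ be all nonzero, and define m_k = Σ_{j=0}^{a−1} p_j · z_j^k for k ∈ ℕ. Then the a × a Hankel matrix M_a with entries M_a[r,c] = m_{r+c} (0 ≤ r, c ≤ a−1) is invertible; indeed det M_a = (Π_{j=0}^{a−1} p_j) · (Π_{0 ≤ i < j ≤ a−1} (z_j − z_i))². -/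
open Finset Matrix

/-!
The Hankel matrix of the moments of `∑ j, p j • δ_(z j)` is the Gram-type product
`Vᵀ * diagonal p * V`, where `V` is the Vandermonde matrix of the nodes. When there are as many
nodes as rows, `V` is square, and the determinant can be taken factor by factor.
-/

section

variable {R : Type*} [CommRing R]

/-- The `k`-th moment of the discrete measure with weight `p j` at the node `z j`. The nodes are
indexed by an arbitrary finite type, so their number is independent of the size of the Hankel
matrices formed from the moments. -/
def discreteMoment {ι : Type*} [Fintype ι] (z p : ι → R) (k : ℕ) : R :=
  ∑ j, p j * z j ^ k

/-- The `m × n` Hankel matrix of a sequence, with rows and columns indexed from `0`. -/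
def hankelMatrix {α : Type*} (s : ℕ → α) (m n : ℕ) : Matrix (Fin m) (Fin n) α :=
  of fun r c => s (r + c)

theorem hankelMatrix_discreteMoment {ι : Type*} [Fintype ι] [DecidableEq ι] (z p : ι → R)
    (m n : ℕ) :
    hankelMatrix (discreteMoment z p) m n =
      (rectVandermonde z 1 m)ᵀ * diagonal p * rectVandermonde z 1 n := by
  ext r c
  rw [mul_apply]
  simp only [hankelMatrix, discreteMoment, of_apply, mul_diagonal, transpose_apply,
    rectVandermonde_apply, Pi.one_apply, one_pow, mul_one]
  exact Finset.sum_congr rfl fun j _ => by ring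

variable {a : ℕ}

theorem det_hankelMatrix_discreteMoment (z p : Fin a → R) :
    (hankelMatrix (discreteMoment z p) a a).det = (∏ j, p j) * (vandermonde z).det ^ 2 := by
  have factorization : hankelMatrix (discreteMoment z p) a a =
      (vandermonde z)ᵀ * diagonal p * vandermonde z := by
    rw [vandermonde_eq_projVandermonde]
    exact hankelMatrix_discreteMoment z p a a
  rw [factorization, det_mul, det_mul, det_transpose, det_diagonal]
  ring

theorem isUnit_det_vandermonde_iff (z : Fin a → R) :
    IsUnit (vandermonde z).det ↔ Pairwise fun i j => IsUnit (z j - z i) := by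
  have : Std.Symm fun i j => IsUnit (z j - z i) := ⟨fun _ _ => IsUnit.sub_iff.mp⟩
  simp only [det_vandermonde, IsUnit.prod_iff, mem_univ, true_imp_iff, mem_Ioi, pairwise_iff_lt]

theorem isUnit_hankelMatrix_discreteMoment_iff (z p : Fin a → R) :
    IsUnit (hankelMatrix (discreteMoment z p) a a) ↔
      (∀ j, IsUnit (p j)) ∧ Pairwise fun i j => IsUnit (z j - z i) := by
  rw [isUnit_iff_isUnit_det, det_hankelMatrix_discreteMoment, IsUnit.mul_iff,
    IsUnit.prod_univ_iff, isUnit_pow_iff two_ne_zero, isUnit_det_vandermonde_iff]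

theorem hankel_moment_matrix_det_general (z p : Fin a → R) :
    (hankelMatrix (discreteMoment z p) a a).det =
        (∏ j, p j) * (∏ i, ∏ j ∈ Ioi i, (z j - z i)) ^ 2 ∧
      (IsUnit (hankelMatrix (discreteMoment z p) a a) ↔
        (∀ j, IsUnit (p j)) ∧ Pairwise fun i j => IsUnit (z j - z i)) :=
  ⟨by rw [det_hankelMatrix_discreteMoment, det_vandermonde],
    isUnit_hankelMatrix_discreteMoment_iff z p⟩

end

/-- With pairwise distinct nodes `z_j` and all-nonzero weights `p_j`, the
`a × a` Hankel matrix `M_a[r,c] = m_{r+c}` (where `m_k = Σ_j p_j z_j^k`) has determinant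
`(Π_j p_j) · (Π_{i<j} (z_j - z_i))²`; in particular `M_a` is invertible. -/
theorem hankel_moment_matrix_det (a : ℕ) (ha : 1 ≤ a) (z p : Fin a → ℂ)
    (hz : Function.Injective z) (hp : ∀ j, p j ≠ 0) :
    (Matrix.of fun r c : Fin a => ∑ j : Fin a, p j * z j ^ ((r : ℕ) + (c : ℕ))).det
        = (∏ j : Fin a, p j) * (∏ i : Fin a, ∏ j ∈ Finset.Ioi i, (z j - z i)) ^ 2
    ∧ IsUnit (Matrix.of fun r c : Fin a => ∑ j : Fin a, p j * z j ^ ((r : ℕ) + (c : ℕ))) :=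
  (hankel_moment_matrix_det_general z p).imp_right fun isUnit_iff =>
    isUnit_iff.mpr
      ⟨fun j => (hp j).isUnit, fun _ _ hij => (sub_ne_zero.mpr (hz.ne hij.symm)).isUnit⟩
end

section
/- Let a ≥ 1, let z_0, …, z_{a−1} ∈ ℂ be pairwise distinct and nonzero, let p_0, …, p_{a−1} ∈ ℂ be all nonzero, and define m_k = Σ_{j=0}^{a−1} p_j · z_j^k for k ∈ ℤ. With Y the (a+1) × (a+1) Toeplitz matrix Y[r,c] = m_{r−c}, Y₁ its submatrix with the rightmost column removed and Y₂ its submatrix with the leftmost column removed, the following holds: for every j ∈ {0, …, a−1} there exists a vector v ∈ ℂ^a with v ≠ 0 such that Y₂ v = z_j^{−1} · (Y₁ v) and Y₁ v ≠ 0; i.e., each z_j^{−1} is a generalized eigenvalue of the matrix pencil Y₂ − λ Y₁. -/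
open Finset Matrix

/-!
Let `q` be a polynomial of degree less than the number of columns. Applying the Toeplitz matrix of
the moments to the coefficient vector of `q` gives the vector with entries
`∑ k, p k * q (z k)⁻¹ * z k ^ r`. If `q` vanishes at all inverse nodes except `(z j)⁻¹`, only the
multiple `p j * q (z j)⁻¹` of the geometric vector `(z j ^ r)_r` survives. Shifting the moments by
one index replaces the weights `p k` by `(z k)⁻¹ * p k`, hence multiplies this vector by `(z j)⁻¹`.
A suitable `q` is the product of `X - (z k)⁻¹` over `k ≠ j`.
-/

theorem exists_natDegree_lt_card_eval_eq_zero_of_ne {R ι : Type*} [CommRing R] [IsDomain R]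
    [Fintype ι] {w : ι → R} {j : ι} (hw : ∀ k ≠ j, w k ≠ w j) :
    ∃ q : Polynomial R, q.natDegree < Fintype.card ι ∧ q.eval (w j) ≠ 0 ∧
      ∀ k ≠ j, q.eval (w k) = 0 := by
  classical
  refine ⟨Lagrange.nodal (univ.erase j) w, ?_, ?_, fun k hk => ?_⟩
  · rw [Lagrange.natDegree_nodal]
    exact card_erase_lt_of_mem (mem_univ j)
  · exact Lagrange.eval_nodal_not_at_node fun k hk => (hw k (ne_of_mem_erase hk)).symm
  · exact Lagrange.eval_nodal_at_node (mem_erase_of_ne_of_mem hk (mem_univ k))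

section

variable {K ι : Type*} [Field K] [Fintype ι] {z : ι → K}

/-- The `n`-th moment `∑ k, p k * z k ^ n` of the nodes `z` with weights `p`. For negative `n` it is
meaningful only if all nodes are nonzero, since `0⁻¹ = 0`. -/
def moment (z p : ι → K) (n : ℤ) : K :=
  ∑ k, p k * z k ^ n

/-- The `m × n` Toeplitz matrix of the two-sided sequence `u`: its `(r, c)` entry is `u (r - c)`,
with rows and columns counted from `0`. -/
def toeplitz {α : Type*} (u : ℤ → α) (m n : ℕ) : Matrix (Fin m) (Fin n) α :=
  of fun r c => u ((r : ℤ) - (c : ℤ))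

theorem moment_sub_one (hz0 : ∀ k, z k ≠ 0) (p : ι → K) (n : ℤ) :
    moment z p (n - 1) = moment z (fun k => (z k)⁻¹ * p k) n :=
  sum_congr rfl fun k _ => by rw [zpow_sub_one₀ (hz0 k)]; ring

theorem toeplitz_moment_mulVec_coeff (hz0 : ∀ k, z k ≠ 0) (p : ι → K) {q : Polynomial K} {n : ℕ}
    (hq : q.natDegree < n) (m : ℕ) :
    toeplitz (moment z p) m n *ᵥ (fun c => q.coeff c) =
      fun r : Fin m => ∑ k, p k * q.eval (z k)⁻¹ * z k ^ (r : ℕ) := by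
  funext r
  calc
    ∑ c : Fin n, (∑ k, p k * z k ^ ((r : ℤ) - (c : ℤ))) * q.coeff c
      = ∑ k, ∑ c : Fin n, p k * (q.coeff c * (z k)⁻¹ ^ (c : ℕ)) * z k ^ (r : ℕ) := by
        simp_rw [sum_mul]
        rw [sum_comm]
        refine sum_congr rfl fun k _ => sum_congr rfl fun c _ => ?_
        rw [zpow_sub₀ (hz0 k), zpow_natCast, zpow_natCast, inv_pow]
        ring
    _ = ∑ k, p k * q.eval (z k)⁻¹ * z k ^ (r : ℕ) := by
        simp_rw [Polynomial.eval_eq_sum_range' hq, sum_range, mul_sum, sum_mul]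

theorem toeplitz_moment_mulVec_coeff_of_eval_eq_zero (hz0 : ∀ k, z k ≠ 0) (p : ι → K)
    {q : Polynomial K} {n : ℕ} (hq : q.natDegree < n) {j : ι}
    (hroot : ∀ k ≠ j, q.eval (z k)⁻¹ = 0) (m : ℕ) :
    toeplitz (moment z p) m n *ᵥ (fun c => q.coeff c) =
      (p j * q.eval (z j)⁻¹) • fun r : Fin m => z j ^ (r : ℕ) := by
  rw [toeplitz_moment_mulVec_coeff hz0 p hq]
  funext r
  exact Fintype.sum_eq_single j fun k hk => by rw [hroot k hk, mul_zero, zero_mul]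

theorem inverse_node_is_generalized_eigenvalue_general (hz0 : ∀ k, z k ≠ 0) {p : ι → K} {j : ι}
    (hz : ∀ k ≠ j, z k ≠ z j) (hp : p j ≠ 0) {m n : ℕ} [NeZero m] (hn : Fintype.card ι ≤ n) :
    ∃ v : Fin n → K, v ≠ 0 ∧
      toeplitz (fun i => moment z p (i - 1)) m n *ᵥ v =
        (z j)⁻¹ • toeplitz (moment z p) m n *ᵥ v ∧
      toeplitz (moment z p) m n *ᵥ v ≠ 0 := by
  obtain ⟨q, hdeg, hqj, hroot⟩ := exists_natDegree_lt_card_eval_eq_zero_of_ne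
    (w := fun k => (z k)⁻¹) fun k hk => inv_injective.ne (hz k hk)
  have hY (p' : ι → K) := toeplitz_moment_mulVec_coeff_of_eval_eq_zero hz0 p'
    (hdeg.trans_le hn) hroot m
  have hY₁ : toeplitz (moment z p) m n *ᵥ (fun c => q.coeff c) ≠ 0 := by
    rw [hY]
    exact smul_ne_zero (mul_ne_zero hp hqj) fun h => pow_ne_zero _ (hz0 j) (congrFun h 0)
  refine ⟨fun c => q.coeff c, fun hv => hY₁ (by rw [hv, mulVec_zero]), ?_, hY₁⟩
  simp_rw [moment_sub_one hz0]
  rw [hY, hY, smul_smul, mul_assoc]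

end

/-- With pairwise distinct nonzero nodes `z_j`, all-nonzero weights `p_j`
and moments `m_k = Σ_j p_j z_j^k` (`k ∈ ℤ`), consider the `(a+1) × a` Toeplitz matrices
`Y₁[r,c] = m_{r-c}` and `Y₂[r,c] = m_{r-c-1}`. Then for every `j` there is a nonzero
vector `v` with `Y₂ v = z_j⁻¹ · (Y₁ v)` and `Y₁ v ≠ 0`; i.e., each `z_j⁻¹` is a
generalized eigenvalue of the pencil `Y₂ - λ Y₁`. -/
theorem inverse_node_is_generalized_eigenvalue (a : ℕ) (ha : 1 ≤ a)
    (z p : Fin a → ℂ) (hz0 : ∀ j, z j ≠ 0) (hz : Function.Injective z)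
    (hp : ∀ j, p j ≠ 0) (j : Fin a) :
    ∃ v : Fin a → ℂ, v ≠ 0 ∧
      (Matrix.of fun (r : Fin (a + 1)) (c : Fin a) =>
          ∑ k : Fin a, p k * z k ^ ((r : ℤ) - (c : ℤ) - 1)).mulVec v
        = (z j)⁻¹ • (Matrix.of fun (r : Fin (a + 1)) (c : Fin a) =>
            ∑ k : Fin a, p k * z k ^ ((r : ℤ) - (c : ℤ))).mulVec v
      ∧ (Matrix.of fun (r : Fin (a + 1)) (c : Fin a) =>
          ∑ k : Fin a, p k * z k ^ ((r : ℤ) - (c : ℤ))).mulVec v ≠ 0 :=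
  inverse_node_is_generalized_eigenvalue_general hz0 (fun _ hk => hz.ne hk) (hp j)
    (Fintype.card_fin a).le
end

section
/- Let B, L ≥ 1, N = B·L, and ω_N = exp(−2πi/N). Let x̂ ∈ ℂ^N and i ∈ {0, …, B−1}, and suppose there is exactly one j₀ ∈ {0, …, L−1} with x̂_{j₀B+i} ≠ 0; set f₀ = j₀B + i. Define the bucket measurements y_τ = Σ_{j=0}^{L−1} x̂_{jB+i} · ω_N^{τ(jB+i)} for τ = 0, 1. Then y_0 = x̂_{f₀} ≠ 0, y_1 = y_0 · ω_N^{f₀}, and f₀ is the unique element f of {i, i+B, …, i+(L−1)B} satisfying y_1 = y_0 · ω_N^{f}. Hence the single-ton decoder recovers the position f₀ and the value x̂_{f₀} = y_0 exactly. -/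
open Finset Complex

/-- The frequency `j·B + i` of bucket `i` (for `j < L`), as an index into `Fin N`
where `N = B·L`. -/
def bucketIdx (B L N : ℕ) (hN : N = B * L) (i : ℕ) (hi : i < B) (j : Fin L) : Fin N :=
  ⟨(j : ℕ) * B + i, by
    have hj := j.isLt
    subst hN
    calc (j : ℕ) * B + i < (j : ℕ) * B + B := by omega
      _ = ((j : ℕ) + 1) * B := by ring
      _ ≤ L * B := Nat.mul_le_mul_right B hj
      _ = B * L := Nat.mul_comm L B⟩

/-- The measurement of bucket `i` at shift `τ`:
`ŷ_{B,τ}[i] = Σ_{j<L} x̂_{jB+i} · ω_N^{τ(jB+i)}` with `ω_N = exp(-2πi/N)`. -/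
noncomputable def bucketMeas (B L N : ℕ) (hN : N = B * L) (xhat : Fin N → ℂ)
    (i : ℕ) (hi : i < B) (τ : ℕ) : ℂ :=
  ∑ j : Fin L, xhat (bucketIdx B L N hN i hi j) *
    Complex.exp (-2 * Real.pi * Complex.I / N) ^ (τ * ((j : ℕ) * B + i))

/-- The measurement at shift `τ` of a spectrum `x` whose frequencies `freq j`, `j : ι`, alias into
one bucket. The twiddle factor `ζ` is any element of a commutative semiring, which makes room for
number-theoretic transforms alongside `ζ = exp (-2πi/N)`; for the latter and `freq = bucketIdx` it
is definitionally `bucketMeas`. -/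
def aliasSum {R ι : Type*} [CommSemiring R] [Fintype ι] {N : ℕ} (ζ : R) (x : Fin N → R)
    (freq : ι → Fin N) (τ : ℕ) : R :=
  ∑ j, x (freq j) * ζ ^ (τ * (freq j : ℕ))

theorem aliasSum_eq_of_forall_ne {R ι : Type*} [CommSemiring R] [Fintype ι] {N : ℕ} (ζ : R)
    {x : Fin N → R} {freq : ι → Fin N} {j₀ : ι} (hrest : ∀ j, j ≠ j₀ → x (freq j) = 0) (τ : ℕ) :
    aliasSum ζ x freq τ = x (freq j₀) * ζ ^ (τ * (freq j₀ : ℕ)) :=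
  Fintype.sum_eq_single j₀ fun j hj ↦ by rw [hrest j hj, zero_mul]

theorem pow_val_injective_of_isPrimitiveRoot {M : Type*} [CommMonoid M] {ζ : M} {N : ℕ}
    (hζ : IsPrimitiveRoot ζ N) : Function.Injective fun f : Fin N ↦ ζ ^ (f : ℕ) :=
  fun f g h ↦ Fin.ext (hζ.pow_inj f.isLt g.isLt h)

theorem singleton_decoder_exact_general {R ι : Type*} [CommSemiring R] [IsCancelMulZero R]
    [Fintype ι] {N : ℕ} {ζ : R} (hζ : IsPrimitiveRoot ζ N) {x : Fin N → R} {freq : ι → Fin N}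
    (hfreq : Function.Injective freq) {j₀ : ι} (hone : x (freq j₀) ≠ 0)
    (hrest : ∀ j, j ≠ j₀ → x (freq j) = 0) :
    aliasSum ζ x freq 0 = x (freq j₀)
    ∧ aliasSum ζ x freq 0 ≠ 0
    ∧ aliasSum ζ x freq 1 = aliasSum ζ x freq 0 * ζ ^ (freq j₀ : ℕ)
    ∧ ∀ j, aliasSum ζ x freq 1 = aliasSum ζ x freq 0 * ζ ^ (freq j : ℕ) ↔ j = j₀ := by
  have value : aliasSum ζ x freq 0 = x (freq j₀) := by
    rw [aliasSum_eq_of_forall_ne ζ hrest, zero_mul, pow_zero, mul_one]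
  have shifted : aliasSum ζ x freq 1 = x (freq j₀) * ζ ^ (freq j₀ : ℕ) := by
    rw [aliasSum_eq_of_forall_ne ζ hrest, one_mul]
  rw [value, shifted]
  have twiddle_injective : Function.Injective fun j ↦ ζ ^ (freq j : ℕ) :=
    (pow_val_injective_of_isPrimitiveRoot hζ).comp hfreq
  exact ⟨rfl, hone, rfl, fun j ↦
    (mul_right_inj' hone).trans (twiddle_injective.eq_iff.trans eq_comm)⟩

theorem isPrimitiveRoot_exp_neg (N : ℕ) (hN : N ≠ 0) :
    IsPrimitiveRoot (Complex.exp (-2 * Real.pi * Complex.I / N)) N := by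
  have h := (Complex.isPrimitiveRoot_exp N hN).inv
  rwa [← Complex.exp_neg, ← neg_div, ← neg_mul, ← neg_mul] at h

theorem bucketIdx_injective (B L N : ℕ) (hN : N = B * L) (i : ℕ) (hi : i < B) :
    Function.Injective (bucketIdx B L N hN i hi) := by
  intro j k h
  have hmul : (j : ℕ) * B = k * B := Nat.add_right_cancel (congrArg Fin.val h)
  exact Fin.ext (Nat.eq_of_mul_eq_mul_right (Nat.zero_lt_of_lt hi) hmul)

/-- If bucket `i` is a single-ton, i.e. exactly one `j₀ < L` has
`x̂_{j₀B+i} ≠ 0`, and `y_τ = Σ_{j<L} x̂_{jB+i} ω_N^{τ(jB+i)}` for `τ = 0, 1`, then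
`y₀ = x̂_{f₀} ≠ 0`, `y₁ = y₀ · ω_N^{f₀}` with `f₀ = j₀B + i`, and `f₀` is the unique
element `f = jB + i` of the bucket satisfying `y₁ = y₀ · ω_N^f`. Hence the single-ton
decoder recovers the position `f₀` and the value `x̂_{f₀} = y₀` exactly. -/
theorem singleton_decoder_exact (B L : ℕ) (hB : 1 ≤ B) (hL : 1 ≤ L) (N : ℕ)
    (hN : N = B * L) (xhat : Fin N → ℂ) (i : ℕ) (hi : i < B) (j₀ : Fin L)
    (hone : xhat (bucketIdx B L N hN i hi j₀) ≠ 0)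
    (hrest : ∀ j : Fin L, j ≠ j₀ → xhat (bucketIdx B L N hN i hi j) = 0) :
    bucketMeas B L N hN xhat i hi 0 = xhat (bucketIdx B L N hN i hi j₀)
    ∧ bucketMeas B L N hN xhat i hi 0 ≠ 0
    ∧ bucketMeas B L N hN xhat i hi 1
        = bucketMeas B L N hN xhat i hi 0 *
          Complex.exp (-2 * Real.pi * Complex.I / N) ^ ((j₀ : ℕ) * B + i)
    ∧ ∀ j : Fin L,
        (bucketMeas B L N hN xhat i hi 1
          = bucketMeas B L N hN xhat i hi 0 *
            Complex.exp (-2 * Real.pi * Complex.I / N) ^ ((j : ℕ) * B + i)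
          ↔ j = j₀) :=
  singleton_decoder_exact_general
    (isPrimitiveRoot_exp_neg N (Nat.ne_zero_of_lt (bucketIdx B L N hN i hi j₀).isLt))
    (bucketIdx_injective B L N hN i hi) hone hrest
end
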